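/- Every vector in S is an integer linear combination of the eight vectors A₀, B₀, C₀, D₀, E₀, F₀, G₀, H₀; that is, for every v ∈ S there exist integers m₁,…,m₈ with v = m₁A₀ + m₂B₀ + m₃C₀ + m₄D₀ + m₅E₀ + m₆F₀ + m₇G₀ + m₈H₀. -/

import Mathlib

noncomputable section
open Real Complex

namespace Triacontagonal

/-- The golden ratio. -/
def τ : ℝ := (1 + Real.sqrt 5) / 2

/-- The constant 3^(-1/2) * 5^(-1/4). -/
def k0 : ℝ := (3 : ℝ) ^ (-(1:ℝ)/2) * (5 : ℝ) ^ (-(1:ℝ)/4)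

/-- `a` is the positive real with 2a² = 1 + 3^(-1/2)·5^(-1/4)·τ^(3/2). -/
def a : ℝ := Real.sqrt ((1 + k0 * τ ^ ((3:ℝ)/2)) / 2)

/-- `b` is the positive real with 2b² = 1 + 3^(-1/2)·5^(-1/4)·τ^(-3/2). -/
def b : ℝ := Real.sqrt ((1 + k0 * τ ^ (-((3:ℝ)/2))) / 2)

/-- `c` is the positive real with 2c² = 1 - 3^(-1/2)·5^(-1/4)·τ^(-3/2). -/
def c : ℝ := Real.sqrt ((1 - k0 * τ ^ (-((3:ℝ)/2))) / 2)

/-- `d` is the positive real with 2d² = 1 - 3^(-1/2)·5^(-1/4)·τ^(3/2). -/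
def d : ℝ := Real.sqrt ((1 - k0 * τ ^ ((3:ℝ)/2)) / 2)

/-- `cc n = 2 cos(nπ/30)`. -/
def cc (n : ℤ) : ℝ := 2 * Real.cos (n * Real.pi / 30)

/-- `ω = exp(iπ/30)`, a primitive 60th root of unity. -/
def ω : ℂ := Complex.exp (Real.pi * Complex.I / 30)

def r1 : ℝ := a / cc 9
def r2 : ℝ := b / cc 9
def r3 : ℝ := c / cc 9
def r4 : ℝ := d / cc 9
def r5 : ℝ := a / cc 3
def r6 : ℝ := b / cc 3
def r7 : ℝ := c / cc 3
def r8 : ℝ := d / cc 3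

/-- The eight cycles of 30 vectors each in ℂ⁴. -/
def A (n : Fin 30) : Fin 4 → ℂ :=
  ![(r1 : ℂ) * ω ^ (2 * (n : ℕ)), (r4 : ℂ) * ω ^ (22 * (n : ℕ)),
    (r6 : ℂ) * ω ^ (14 * (n : ℕ) + 1), (r7 : ℂ) * ω ^ (26 * (n : ℕ) + 1)]

def B (n : Fin 30) : Fin 4 → ℂ :=
  ![(r2 : ℂ) * ω ^ (2 * (n : ℕ) + 29), (r3 : ℂ) * ω ^ (22 * (n : ℕ) + 19),
    -((r8 : ℂ) * ω ^ (14 * (n : ℕ) + 24)), -((r5 : ℂ) * ω ^ (26 * (n : ℕ) + 18))]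

def C (n : Fin 30) : Fin 4 → ℂ :=
  ![(r3 : ℂ) * ω ^ (2 * (n : ℕ) + 29), -((r2 : ℂ) * ω ^ (22 * (n : ℕ) + 19)),
    (r5 : ℂ) * ω ^ (14 * (n : ℕ) + 24), -((r8 : ℂ) * ω ^ (26 * (n : ℕ) + 18))]

def D (n : Fin 30) : Fin 4 → ℂ :=
  ![(r4 : ℂ) * ω ^ (2 * (n : ℕ)), -((r1 : ℂ) * ω ^ (22 * (n : ℕ))),
    (r7 : ℂ) * ω ^ (14 * (n : ℕ) + 1), -((r6 : ℂ) * ω ^ (26 * (n : ℕ) + 1))]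

def E (n : Fin 30) : Fin 4 → ℂ :=
  ![(r5 : ℂ) * ω ^ (2 * (n : ℕ)), (r8 : ℂ) * ω ^ (22 * (n : ℕ)),
    -((r2 : ℂ) * ω ^ (14 * (n : ℕ) + 1)), -((r3 : ℂ) * ω ^ (26 * (n : ℕ) + 1))]

def F (n : Fin 30) : Fin 4 → ℂ :=
  ![(r6 : ℂ) * ω ^ (2 * (n : ℕ) + 29), (r7 : ℂ) * ω ^ (22 * (n : ℕ) + 19),
    (r4 : ℂ) * ω ^ (14 * (n : ℕ) + 24), (r1 : ℂ) * ω ^ (26 * (n : ℕ) + 18)]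

def G (n : Fin 30) : Fin 4 → ℂ :=
  ![(r7 : ℂ) * ω ^ (2 * (n : ℕ) + 29), -((r6 : ℂ) * ω ^ (22 * (n : ℕ) + 19)),
    -((r1 : ℂ) * ω ^ (14 * (n : ℕ) + 24)), (r4 : ℂ) * ω ^ (26 * (n : ℕ) + 18)]

def H (n : Fin 30) : Fin 4 → ℂ :=
  ![(r8 : ℂ) * ω ^ (2 * (n : ℕ)), -((r5 : ℂ) * ω ^ (22 * (n : ℕ))),
    -((r3 : ℂ) * ω ^ (14 * (n : ℕ) + 1)), (r2 : ℂ) * ω ^ (26 * (n : ℕ) + 1)]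

/-- The set of the 240 vectors. -/
def S : Set (Fin 4 → ℂ) :=
  {v | ∃ n : Fin 30, v = A n ∨ v = B n ∨ v = C n ∨ v = D n ∨
    v = E n ∨ v = F n ∨ v = G n ∨ v = H n}

/-- The real inner product on ℂ⁴: ⟨v,w⟩_ℝ = Re(Σᵢ vᵢ · conj(wᵢ)). -/
def rinner (v w : Fin 4 → ℂ) : ℝ := (∑ i, v i * star (w i)).re

/-- The associated Euclidean norm. -/
def enorm (v : Fin 4 → ℂ) : ℝ := Real.sqrt (rinner v v)


/-- `2 cos (π/15)`. -/
def xx : ℝ := 2 * Real.cos (Real.pi / 15)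

lemma tau_eq : τ = xx ^ 3 - 3 * xx := by
  have h := Real.cos_three_mul (Real.pi / 15)
  rw [show 3 * (Real.pi / 15) = Real.pi / 5 by ring, Real.cos_pi_div_five] at h
  unfold τ xx
  linear_combination 2 * h

lemma xx_gt : 1 < xx := by
  have h : Real.cos (Real.pi / 3) < Real.cos (Real.pi / 15) := by
    apply Real.cos_lt_cos_of_nonneg_of_le_pi <;> linarith [Real.pi_pos]
  rw [Real.cos_pi_div_three] at h
  unfold xx
  linarith

lemma f_xx : xx ^ 4 + xx ^ 3 - 4 * xx ^ 2 - 4 * xx + 1 = 0 := by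
  have h3 := Real.cos_three_mul (Real.pi / 15)
  have h2 := Real.cos_two_mul (Real.pi / 15)
  have hs3 := Real.sin_three_mul (Real.pi / 15)
  have hs2 := Real.sin_two_mul (Real.pi / 15)
  have h := Real.cos_add (3 * (Real.pi / 15)) (2 * (Real.pi / 15))
  have hsc := Real.sin_sq_add_cos_sq (Real.pi / 15)
  rw [show 3 * (Real.pi / 15) + 2 * (Real.pi / 15) = Real.pi / 3 by ring,
    Real.cos_pi_div_three, h3, h2, hs3, hs2] at h
  have hx := xx_gt
  have hne : xx - 1 ≠ 0 := by linarith
  apply mul_left_cancel₀ hne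
  unfold xx
  generalize Real.cos (Real.pi / 15) = u at *
  generalize Real.sin (Real.pi / 15) = s at *
  have hs : s ^ 2 = 1 - u ^ 2 := by linarith
  have hs4 : s ^ 4 = (1 - u ^ 2) ^ 2 := by rw [← hs]; ring
  linear_combination (-2) * h + 12 * u * hs - 16 * u * hs4

lemma tau_pos : 0 < τ := by unfold τ; positivity

lemma k0_sq : k0 ^ 2 * (3 * Real.sqrt 5) = 1 := by
  have h3 : ((3 : ℝ) ^ (-(1:ℝ)/2)) ^ 2 = 3⁻¹ := by
    rw [← Real.rpow_natCast, ← Real.rpow_mul (by norm_num)]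
    norm_num [Real.rpow_neg_one]
  have h5 : ((5 : ℝ) ^ (-(1:ℝ)/4)) ^ 2 = (Real.sqrt 5)⁻¹ := by
    rw [← Real.rpow_natCast, ← Real.rpow_mul (by norm_num), Real.sqrt_eq_rpow,
      ← Real.rpow_neg (by norm_num)]
    norm_num
  have : Real.sqrt 5 ≠ 0 := by positivity
  unfold k0
  rw [mul_pow, h3, h5]
  field_simp

lemma sqrt5_eq : Real.sqrt 5 = 2 * τ - 1 := by unfold τ; ring

lemma p_eq : k0 * τ ^ ((3:ℝ)/2) = -4/15*xx^3 + 2/15*xx^2 + 6/5*xx - 1/15 := by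
  have hf := f_xx
  have ht := tau_eq
  have hx := xx_gt
  have hk := k0_sq
  rw [sqrt5_eq] at hk
  have hT : (τ ^ ((3:ℝ)/2)) ^ 2 = τ ^ 3 := by
    rw [← Real.rpow_natCast, ← Real.rpow_mul tau_pos.le]
    norm_num
  have hpos : 0 < k0 * τ ^ ((3:ℝ)/2) := by
    have := Real.rpow_pos_of_pos tau_pos ((3:ℝ)/2)
    unfold k0
    positivity
  have hP : 0 < -4/15*xx^3 + 2/15*xx^2 + 6/5*xx - 1/15 := by
    have e : (-4/15*xx^3 + 2/15*xx^2 + 6/5*xx - 1/15) * (xx ^ 2 + 2 * xx + 2) = xx ^ 2 + 2 * xx := by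
      linear_combination (-4/15*xx - 2/15) * hf
    have : 0 < xx ^ 2 + 2 * xx + 2 := by positivity
    have h2 : 0 < xx ^ 2 + 2 * xx := by positivity
    rw [← e] at h2
    exact pos_of_mul_pos_left h2 this.le
  have hs : 0 < 3 * (2 * τ - 1) := by
    rw [← sqrt5_eq]; positivity
  have hsq : (k0 * τ ^ ((3:ℝ)/2)) ^ 2 = (-4/15*xx^3 + 2/15*xx^2 + 6/5*xx - 1/15) ^ 2 := by
    apply mul_right_cancel₀ hs.ne'
    have h1 : (k0 * τ ^ ((3:ℝ)/2)) ^ 2 * (3 * (2 * τ - 1)) = τ ^ 3 := by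
      rw [mul_pow, hT]
      linear_combination τ ^ 3 * hk
    rw [h1, ht]
    linear_combination (-1 : ℝ) * (-43/75*xx^5 + 11/75*xx^4 + 116/75*xx^3 - 4/75*xx^2 + 26/75*xx - 1/75) * hf
  exact (pow_left_inj₀ hpos.le hP.le two_ne_zero).1 hsq

lemma tau_sq : τ ^ 2 = τ + 1 := by
  have hf := f_xx
  rw [tau_eq]
  linear_combination (xx^2 - xx - 1) * hf

lemma q_eq : k0 * τ ^ (-((3:ℝ)/2)) = -2/15*xx^3 + 2/5*xx^2 + 4/15*xx - 13/15 := by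
  have hf := f_xx
  have e : τ ^ (-((3:ℝ)/2)) = τ ^ ((3:ℝ)/2) * (2 * τ - 3) := by
    have h1 : τ ^ ((3:ℝ)/2) = τ ^ (-((3:ℝ)/2)) * τ ^ 3 := by
      rw [← Real.rpow_natCast, ← Real.rpow_add tau_pos]
      norm_num
    rw [h1]
    linear_combination (-1 : ℝ) * τ ^ (-((3:ℝ)/2)) * (2 * τ ^ 2 - τ + 1) * tau_sq
  rw [e, ← mul_assoc, p_eq, tau_eq]
  linear_combination (-8/15*xx^2 + 4/5*xx + 16/15) * hf

lemma cc1_sq : cc 1 ^ 2 = 2 + xx := by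
  have h := Real.cos_two_mul (Real.pi / 30)
  rw [show 2 * (Real.pi / 30) = Real.pi / 15 by ring] at h
  unfold cc xx
  push_cast
  rw [one_mul]
  linear_combination (-2) * h

lemma cc_pos (n : ℤ) (h0 : 0 ≤ n) (h : n < 15) : 0 < cc n := by
  have h1 : (n : ℝ) < 15 := by exact_mod_cast h
  have h2 : (0 : ℝ) ≤ n := by exact_mod_cast h0
  have := Real.pi_pos
  unfold cc
  have : 0 < Real.cos (n * Real.pi / 30) := by
    apply Real.cos_pos_of_mem_Ioo
    constructor <;> nlinarith
  linarith

lemma sqrt_aux (u v z : ℝ) (hz : 0 ≤ z) (h : u = z ^ 2 * v) :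
    Real.sqrt u = z * Real.sqrt v := by
  rw [h, Real.sqrt_mul (sq_nonneg z), Real.sqrt_sq hz]

lemma a_eq : a = (1 + xx) * d := by
  have hf := f_xx
  unfold a d
  apply sqrt_aux _ _ _ (by linarith [xx_gt])
  rw [p_eq]
  linear_combination 1/2 * (-4/15*xx - 2/15) * hf

lemma c_eq : c = cc 1 * d := by
  have hf := f_xx
  unfold c d
  apply sqrt_aux _ _ _ (cc_pos 1 (by norm_num) (by norm_num)).le
  rw [p_eq, q_eq, cc1_sq]
  linear_combination 1/2 * (-4/15) * hf

lemma b_eq : b = (-xx^3 + xx^2 + 3*xx - 1) * cc 1 * d := by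
  have hf := f_xx
  unfold b d
  apply sqrt_aux
  · apply mul_nonneg _ (cc_pos 1 (by norm_num) (by norm_num)).le
    have e : (-xx^3 + xx^2 + 3*xx - 1) * (2 + xx) = τ * (1 + xx) := by
      rw [tau_eq]
      linear_combination (-2) * hf
    have h2 : 0 < τ * (1 + xx) := mul_pos tau_pos (by linarith [xx_gt])
    rw [← e] at h2
    exact (pos_of_mul_pos_left h2 (by linarith [xx_gt])).le
  · rw [p_eq, q_eq, mul_pow, cc1_sq]
    linear_combination 1/2 * (-4/15*xx^6 + 2/5*xx^5 + 32/15*xx^4 - 10/3*xx^3 - 52/15*xx^2 + 32/5*xx - 2) * hf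

lemma cc3_eq : cc 3 = τ * cc 9 := by
  have h9 : cc 9 = cc 3 ^ 3 - 3 * cc 3 := by
    have h := Real.cos_three_mul (3 * Real.pi / 30)
    rw [show 3 * (3 * Real.pi / 30) = 9 * Real.pi / 30 by ring] at h
    unfold cc
    push_cast
    linear_combination 2 * h
  have h3 : cc 3 ^ 2 = 2 + τ := by
    have h := Real.cos_two_mul (3 * Real.pi / 30)
    rw [show 2 * (3 * Real.pi / 30) = Real.pi / 5 by ring, Real.cos_pi_div_five] at h
    unfold cc τ
    push_cast
    linear_combination (-2) * h
  rw [h9]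
  linear_combination (-τ * cc 3) * h3 - cc 3 * tau_sq

lemma rr (u : ℝ) : u / cc 9 = τ * (u / cc 3) := by
  have h9 := (cc_pos 9 (by norm_num) (by norm_num)).ne'
  have ht := tau_pos.ne'
  rw [cc3_eq]
  field_simp

lemma ω_ne : ω ≠ 0 := Complex.exp_ne_zero _

lemma cc1_ω : ((cc 1 : ℝ) : ℂ) = ω + ω⁻¹ := by
  unfold cc ω
  rw [← Complex.exp_neg]
  push_cast
  rw [Complex.cos]
  ring_nf

lemma xx_ω : (xx : ℂ) = (ω + ω⁻¹) ^ 2 - 2 := by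
  rw [← cc1_ω, ← Complex.ofReal_pow, cc1_sq]
  push_cast
  ring

lemma phi_ω : ω^16 + ω^14 - ω^10 - ω^8 - ω^6 + ω^2 + 1 = 0 := by
  have hf : (xx : ℂ) ^ 4 + (xx : ℂ) ^ 3 - 4 * (xx : ℂ) ^ 2 - 4 * xx + 1 = 0 := by
    exact_mod_cast congrArg (fun t : ℝ => (t : ℂ)) f_xx
  have hX : (xx : ℂ) * ω ^ 2 = ω ^ 4 + 1 := by
    have := ω_ne
    rw [xx_ω]
    field_simp
    ring
  have e : ((xx : ℂ) * ω ^ 2) ^ 4 + ((xx : ℂ) * ω ^ 2) ^ 3 * ω ^ 2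
      - 4 * ((xx : ℂ) * ω ^ 2) ^ 2 * ω ^ 4 - 4 * ((xx : ℂ) * ω ^ 2) * ω ^ 6 + ω ^ 8 = 0 := by
    linear_combination ω ^ 8 * hf
  rw [hX] at e
  linear_combination e

lemma inv_ω : ω⁻¹ = -ω^15 - ω^13 + ω^9 + ω^7 + ω^5 - ω := by
  have h := mul_inv_cancel₀ ω_ne
  linear_combination ω⁻¹ * phi_ω - (ω^15 + ω^13 - ω^9 - ω^7 - ω^5 + ω) * h

lemma Y_ω : ((cc 1 : ℝ) : ℂ) = -ω^15 - ω^13 + ω^9 + ω^7 + ω^5 := by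
  rw [cc1_ω, inv_ω]
  ring

lemma X_ω : (xx : ℂ) = -ω^14 - ω^12 + ω^8 + ω^6 + ω^4 + ω^2 - 1 := by
  rw [xx_ω, ← cc1_ω, Y_ω]
  linear_combination (ω^14 + ω^12 - ω^8 - ω^6 - ω^4 - 1) * phi_ω

lemma T_ω : (τ : ℂ) = -ω^14 + ω^6 + ω^4 := by
  rw [tau_eq]
  push_cast
  rw [X_ω]
  linear_combination (-ω^26 - 2*ω^24 - ω^22 + 2*ω^20 + 4*ω^18 + 4*ω^16 + 4*ω^14 - ω^12 - 4*ω^10 - 4*ω^8 - 2*ω^6 - 2*ω^4 - 2*ω^2 + 2) * phi_ω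

lemma r7_ω : (r7 : ℂ) = r8 * (-ω^15 - ω^13 + ω^9 + ω^7 + ω^5) := by
  rw [← Y_ω, ← Complex.ofReal_mul]
  unfold r7 r8
  rw [c_eq]
  congr 1
  ring

lemma r5_ω : (r5 : ℂ) = r8 * (-ω^14 - ω^12 + ω^8 + ω^6 + ω^4 + ω^2) := by
  have e : r5 = r8 * (1 + xx) := by
    unfold r5 r8
    rw [a_eq]
    ring
  rw [e]
  push_cast
  rw [X_ω]
  ring

lemma r6_ω : (r6 : ℂ) = r8 * (-ω^11 + ω^5 + ω^3 + ω) := by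
  have e : r6 = r8 * ((-xx^3 + xx^2 + 3*xx - 1) * cc 1) := by
    unfold r6 r8
    rw [b_eq]
    ring
  rw [e]
  push_cast
  rw [X_ω, Y_ω]
  linear_combination r8 * (-ω^41 - 3*ω^39 - 3*ω^37 + 2*ω^35 + 9*ω^33 + 12*ω^31 + 9*ω^29 - 3*ω^27 - 17*ω^25 - 21*ω^23 - 11*ω^21 + ω^19 + 9*ω^17 + 13*ω^15 + 8*ω^13 + 3*ω^11 - ω^9 - 2*ω^7 - 3*ω^5 - ω) * phi_ω

lemma r1_ω : (r1 : ℂ) = r8 * (-ω^12 - ω^10 + ω^6 + 2*ω^4 + 2*ω^2 + 1) := by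
  have e : r1 = τ * r5 := rr _
  rw [e]
  push_cast
  rw [T_ω, r5_ω]
  linear_combination r8 * (ω^12 - ω^4 - ω^2 - 1) * phi_ω

lemma r2_ω : (r2 : ℂ) = r8 * (-ω^13 - ω^11 + ω^7 + ω^5 + 2*ω^3 + ω) := by
  have e : r2 = τ * r6 := rr _
  rw [e]
  push_cast
  rw [T_ω, r6_ω]
  linear_combination r8 * (ω^9 - ω^7 + ω^5 - ω^3 - ω) * phi_ω

lemma r3_ω : (r3 : ℂ) = r8 * (-ω^15 - ω^13 + ω^7 + 2*ω^5 + ω^3) := by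
  have e : r3 = τ * r7 := rr _
  rw [e]
  push_cast
  rw [T_ω, r7_ω]
  linear_combination r8 * (ω^13 - ω^5 - ω^3) * phi_ω

lemma r4_ω : (r4 : ℂ) = r8 * (-ω^14 + ω^6 + ω^4) := by
  have e : r4 = τ * r8 := rr _
  rw [e]
  push_cast
  rw [T_ω]
  linear_combination r8 * (0) * phi_ω

/-- The multiplier sending `Xₙ` to `Xₙ₊₁`. -/
def tt : Fin 4 → ℂ := ![ω ^ 2, ω ^ 22, ω ^ 14, ω ^ 26]

lemma step_A : tt * A 0 = (2 : ℤ) • A 0 + (1 : ℤ) • B 0 + (1 : ℤ) • C 0 + (1 : ℤ) • D 0 + (1 : ℤ) • E 0 + (1 : ℤ) • F 0 := by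
  funext i
  fin_cases i <;>
    simp [tt, A, B, C, D, E, F] <;>
    simp only [r1_ω, r2_ω, r3_ω, r4_ω, r5_ω, r6_ω, r7_ω]
  · linear_combination r8 * (ω^28 + ω^26 + ω^24 - ω^18 - ω^16 - ω^14 - 2*ω^12 - 2*ω^10 - 2*ω^8 - 2*ω^6 - 2*ω^4 - 2*ω^2 - 2) * phi_ω
  · linear_combination r8 * (-ω^20 + 3*ω^18 - 2*ω^16 + 2*ω^12 - 2*ω^10 + ω^8 + ω^6 - 2*ω^4 + 2*ω^2) * phi_ω
  · linear_combination r8 * (2*ω^22 - ω^20 + ω^18 - ω^14 + ω^12 - 3*ω^10 + 2*ω^8 - 3*ω^6 + ω^4 - ω^2) * phi_ω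
  · linear_combination r8 * (-ω^26 - ω^16 + ω^14 + ω^12 + ω^4 + ω^2) * phi_ω

lemma step_B : tt * B 0 = (-1 : ℤ) • A 0 + (-1 : ℤ) • B 0 + (-1 : ℤ) • E 0 := by
  funext i
  fin_cases i <;>
    simp [tt, A, B, E] <;>
    simp only [r1_ω, r2_ω, r3_ω, r4_ω, r5_ω, r6_ω, r7_ω]
  · linear_combination r8 * (-ω^28 - ω^26 + ω^18 + ω^16 + ω^14 + 2*ω^12 + ω^10 + 2*ω^8 + 2*ω^6 + ω^4 + 2*ω^2 + 1) * phi_ω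
  · linear_combination r8 * (-ω^40 - ω^34 + ω^32 + ω^26 + ω^22 + ω^20 - ω^18 + ω^16 + ω^14 - ω^12 + 2*ω^10 + 2*ω^4 - ω^2 + 1) * phi_ω
  · linear_combination r8 * (-ω^22 + ω^20 - ω^18 - ω^12 + ω^10 - 2*ω^8 + ω^6 - ω^4) * phi_ω
  · linear_combination r8 * (ω^42 - ω^30 - ω^26 - ω^22 - ω^20 - ω^12 - ω^4) * phi_ω

lemma step_C : tt * C 0 = (-1 : ℤ) • A 0 + (-1 : ℤ) • C 0 + (-1 : ℤ) • D 0 := by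
  funext i
  fin_cases i <;>
    simp [tt, A, C, D] <;>
    simp only [r1_ω, r2_ω, r3_ω, r4_ω, r5_ω, r6_ω, r7_ω]
  · linear_combination r8 * (-ω^30 - ω^28 - ω^24 + ω^20 + ω^16 + ω^14 + ω^12 + 2*ω^10 + ω^8 + ω^6 + 2*ω^4 + ω^2 + 1) * phi_ω
  · linear_combination r8 * (ω^38 - ω^28 - ω^24 - ω^22 - 2*ω^18 + ω^16 - ω^14 - ω^12 - ω^8 - ω^6 - ω^2 - 1) * phi_ω
  · linear_combination r8 * (-ω^36 + ω^24 - ω^22 + ω^20 + ω^16 + ω^14 + 2*ω^10 + 2*ω^6 + ω^2) * phi_ω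
  · linear_combination r8 * (-ω^28 + ω^26 - ω^24 - ω^18 + ω^16 - ω^14 - ω^2) * phi_ω

lemma step_D : tt * D 0 = (1 : ℤ) • A 0 + (1 : ℤ) • C 0 := by
  funext i
  fin_cases i <;>
    simp [tt, A, C, D] <;>
    simp only [r1_ω, r2_ω, r3_ω, r4_ω, r5_ω, r6_ω, r7_ω]
  · linear_combination r8 * (ω^28 + ω^22 - ω^20 - ω^14 - ω^10 - ω^8 - ω^4 - ω^2 - 1) * phi_ω
  · linear_combination r8 * (ω^18 - ω^16 - ω^10 - ω^4) * phi_ω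
  · linear_combination r8 * (ω^22 - ω^14 - ω^10 - ω^6 - ω^2) * phi_ω
  · linear_combination r8 * (ω^22 - ω^20 + ω^18 - ω^16 - ω^10 - ω^6) * phi_ω

lemma step_E : tt * E 0 = (1 : ℤ) • A 0 + (1 : ℤ) • B 0 + (1 : ℤ) • E 0 + (1 : ℤ) • G 0 + (1 : ℤ) • H 0 := by
  funext i
  fin_cases i <;>
    simp [tt, A, B, E, G, H] <;>
    simp only [r1_ω, r2_ω, r3_ω, r4_ω, r5_ω, r6_ω, r7_ω]
  · linear_combination r8 * (ω^28 + ω^26 - ω^16 - ω^14 - ω^12 - ω^10 - ω^8 - 2*ω^6 - ω^4 - ω^2 - 2) * phi_ω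
  · linear_combination r8 * (ω^18 - ω^14 + 2*ω^12 - 2*ω^10 + ω^8 + ω^6 - 2*ω^4 + 2*ω^2 - 1) * phi_ω
  · linear_combination r8 * (-ω^20 + 2*ω^12 + 2*ω^8 + 2*ω^4) * phi_ω
  · linear_combination r8 * (ω^26 + ω^20 - ω^18 - ω^14 - 2*ω^8 - ω^2) * phi_ω

lemma step_F : tt * F 0 = (-1 : ℤ) • A 0 + (-1 : ℤ) • F 0 := by
  funext i
  fin_cases i <;>
    simp [tt, A, F] <;>
    simp only [r1_ω, r2_ω, r3_ω, r4_ω, r5_ω, r6_ω, r7_ω]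
  · linear_combination r8 * (-ω^26 + ω^18 + ω^14 + ω^12 + ω^10 + ω^8 + ω^6 + ω^4 + ω^2 + 1) * phi_ω
  · linear_combination r8 * (-ω^40 + ω^26 + ω^20 - ω^18 + ω^16 + ω^10 + ω^4) * phi_ω
  · linear_combination r8 * (-ω^36 + ω^34 - ω^32 + ω^28 - ω^26 + ω^24 - ω^22 + ω^20 + ω^14 + ω^10 + ω^6 + ω^2) * phi_ω
  · linear_combination r8 * (-ω^40 + ω^32 + ω^28 + ω^26 + ω^24 + ω^22 + ω^20 + ω^18 + ω^16 + ω^10 + ω^6) * phi_ω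

lemma step_G : tt * G 0 = (-1 : ℤ) • E 0 + (-1 : ℤ) • G 0 + (-1 : ℤ) • H 0 := by
  funext i
  fin_cases i <;>
    simp [tt, E, G, H] <;>
    simp only [r1_ω, r2_ω, r3_ω, r4_ω, r5_ω, r6_ω, r7_ω]
  · linear_combination r8 * (-ω^30 - ω^28 + ω^16 + ω^14 + ω^10 + ω^8 + ω^6 + ω^4 + 1) * phi_ω
  · linear_combination r8 * (ω^36 - ω^34 + ω^32 - ω^30 - ω^24 - ω^20 - ω^16 + ω^14 - 2*ω^12 + ω^10 - ω^8 - ω^6 + ω^4 - 2*ω^2 + 1) * phi_ω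
  · linear_combination r8 * (ω^34 - ω^26 - ω^22 - ω^18 - ω^16 - ω^14 - 2*ω^12 - ω^10 - 2*ω^8 - ω^6 - 2*ω^4 - ω^2) * phi_ω
  · linear_combination r8 * (-ω^42 + ω^40 - ω^38 + ω^34 - ω^32 + ω^30 + ω^24 + ω^18 - ω^16 + ω^14 - ω^10 + 2*ω^8 - ω^6 + ω^2) * phi_ω

lemma step_H : tt * H 0 = (1 : ℤ) • E 0 + (1 : ℤ) • G 0 := by
  funext i
  fin_cases i <;>
    simp [tt, E, G, H] <;>
    simp only [r1_ω, r2_ω, r3_ω, r4_ω, r5_ω, r6_ω, r7_ω]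
  · linear_combination r8 * (ω^28 - ω^14 - ω^8 - ω^4) * phi_ω
  · linear_combination r8 * (ω^20 - ω^14 + ω^12 - ω^10 - ω^4 + ω^2 - 1) * phi_ω
  · linear_combination r8 * (-ω^20 + ω^14 + ω^12 + 2*ω^8 + ω^4 + ω^2) * phi_ω
  · linear_combination r8 * (-ω^24 + ω^16 + ω^12 + ω^10 + ω^6 + ω^4) * phi_ω

/-- The lattice spanned by the eight base vectors. -/
def LL : Submodule ℤ (Fin 4 → ℂ) :=
  Submodule.span ℤ (Set.range ![A 0, B 0, C 0, D 0, E 0, F 0, G 0, H 0])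

lemma mem_A : A 0 ∈ LL := Submodule.subset_span ⟨0, rfl⟩
lemma mem_B : B 0 ∈ LL := Submodule.subset_span ⟨1, rfl⟩
lemma mem_C : C 0 ∈ LL := Submodule.subset_span ⟨2, rfl⟩
lemma mem_D : D 0 ∈ LL := Submodule.subset_span ⟨3, rfl⟩
lemma mem_E : E 0 ∈ LL := Submodule.subset_span ⟨4, rfl⟩
lemma mem_F : F 0 ∈ LL := Submodule.subset_span ⟨5, rfl⟩
lemma mem_G : G 0 ∈ LL := Submodule.subset_span ⟨6, rfl⟩
lemma mem_H : H 0 ∈ LL := Submodule.subset_span ⟨7, rfl⟩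

lemma tt_mem (v : Fin 4 → ℂ) (hv : v ∈ LL) : tt * v ∈ LL := by
  have hle : LL ≤ LL.comap (LinearMap.mulLeft ℤ tt) := by
    unfold LL
    rw [Submodule.span_le]
    rintro _ ⟨i, rfl⟩
    change tt * _ ∈ LL
    fin_cases i
    · change tt * A 0 ∈ LL
      rw [step_A]
      exact LL.add_mem (LL.add_mem (LL.add_mem (LL.add_mem (LL.add_mem (LL.smul_mem _ mem_A) (LL.smul_mem _ mem_B)) (LL.smul_mem _ mem_C)) (LL.smul_mem _ mem_D)) (LL.smul_mem _ mem_E)) (LL.smul_mem _ mem_F)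
    · change tt * B 0 ∈ LL
      rw [step_B]
      exact LL.add_mem (LL.add_mem (LL.smul_mem _ mem_A) (LL.smul_mem _ mem_B)) (LL.smul_mem _ mem_E)
    · change tt * C 0 ∈ LL
      rw [step_C]
      exact LL.add_mem (LL.add_mem (LL.smul_mem _ mem_A) (LL.smul_mem _ mem_C)) (LL.smul_mem _ mem_D)
    · change tt * D 0 ∈ LL
      rw [step_D]
      exact LL.add_mem (LL.smul_mem _ mem_A) (LL.smul_mem _ mem_C)
    · change tt * E 0 ∈ LL
      rw [step_E]
      exact LL.add_mem (LL.add_mem (LL.add_mem (LL.add_mem (LL.smul_mem _ mem_A) (LL.smul_mem _ mem_B)) (LL.smul_mem _ mem_E)) (LL.smul_mem _ mem_G)) (LL.smul_mem _ mem_H)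
    · change tt * F 0 ∈ LL
      rw [step_F]
      exact LL.add_mem (LL.smul_mem _ mem_A) (LL.smul_mem _ mem_F)
    · change tt * G 0 ∈ LL
      rw [step_G]
      exact LL.add_mem (LL.add_mem (LL.smul_mem _ mem_E) (LL.smul_mem _ mem_G)) (LL.smul_mem _ mem_H)
    · change tt * H 0 ∈ LL
      rw [step_H]
      exact LL.add_mem (LL.smul_mem _ mem_E) (LL.smul_mem _ mem_G)
  exact hle hv

lemma pow_mem (v : Fin 4 → ℂ) (hv : v ∈ LL) (n : ℕ) : tt ^ n * v ∈ LL := by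
  induction n with
  | zero => simpa using hv
  | succ k ih =>
    rw [pow_succ', mul_assoc]
    exact tt_mem _ ih

lemma pow_A (n : Fin 30) : A n = tt ^ (n : ℕ) * A 0 := by
  funext i
  fin_cases i <;> simp [tt, A] <;> ring

lemma pow_B (n : Fin 30) : B n = tt ^ (n : ℕ) * B 0 := by
  funext i
  fin_cases i <;> simp [tt, B] <;> ring

lemma pow_C (n : Fin 30) : C n = tt ^ (n : ℕ) * C 0 := by
  funext i
  fin_cases i <;> simp [tt, C] <;> ring

lemma pow_D (n : Fin 30) : D n = tt ^ (n : ℕ) * D 0 := by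
  funext i
  fin_cases i <;> simp [tt, D] <;> ring

lemma pow_E (n : Fin 30) : E n = tt ^ (n : ℕ) * E 0 := by
  funext i
  fin_cases i <;> simp [tt, E] <;> ring

lemma pow_F (n : Fin 30) : F n = tt ^ (n : ℕ) * F 0 := by
  funext i
  fin_cases i <;> simp [tt, F] <;> ring

lemma pow_G (n : Fin 30) : G n = tt ^ (n : ℕ) * G 0 := by
  funext i
  fin_cases i <;> simp [tt, G] <;> ring

lemma pow_H (n : Fin 30) : H n = tt ^ (n : ℕ) * H 0 := by
  funext i
  fin_cases i <;> simp [tt, H] <;> ring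

/-- every vector of S is an integer linear combination of
A₀, B₀, C₀, D₀, E₀, F₀, G₀, H₀. -/
theorem stmt13 :
    ∀ v ∈ S, ∃ m : Fin 8 → ℤ,
      v = ∑ i : Fin 8, m i • (![A 0, B 0, C 0, D 0, E 0, F 0, G 0, H 0] i) := by
  rintro v ⟨n, hn⟩
  have hv : v ∈ LL := by
    rcases hn with h | h | h | h | h | h | h | h <;> subst h
    · rw [pow_A]; exact pow_mem _ mem_A _
    · rw [pow_B]; exact pow_mem _ mem_B _
    · rw [pow_C]; exact pow_mem _ mem_C _
    · rw [pow_D]; exact pow_mem _ mem_D _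
    · rw [pow_E]; exact pow_mem _ mem_E _
    · rw [pow_F]; exact pow_mem _ mem_F _
    · rw [pow_G]; exact pow_mem _ mem_G _
    · rw [pow_H]; exact pow_mem _ mem_H _
  obtain ⟨m, hm⟩ := (Submodule.mem_span_range_iff_exists_fun ℤ).1 hv
  exact ⟨m, hm.symm⟩

end Triacontagonal
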